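/- Let A ⊂ ℝⁿ be a symmetric convex Borel set and F ⊂ ℝⁿ a linear subspace of dimension d. Then γ_F(A ∩ F) ≥ γ_n(A), where γ_n is the standard Gaussian measure on ℝⁿ and γ_F the standard Gaussian measure on F. -/

import Mathlib

open MeasureTheory Real Set

/-- The standard Gaussian measure on `ℝᵏ`. -/
noncomputable def stdGaussian (k : ℕ) : Measure (EuclideanSpace ℝ (Fin k)) :=
  volume.withDensity fun x => ENNReal.ofReal ((2 * π) ^ (-(k : ℝ) / 2) * Real.exp (-‖x‖ ^ 2 / 2))

/-!
Split `ℝⁿ = F ⊕ F⊥`, so that `γ_n` is the product of `γ_F` and `γ_{F⊥}`. By the Prékopa–Leindler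
inequality for `γ_F`, the slice function `z ↦ γ_F {x | x + z ∈ A}` on `F⊥` is log-concave. It is
even because `A` and `γ_F` are symmetric, hence maximal at `z = 0`, where it equals `γ_F (A ∩ F)`;
averaging it against the probability measure `γ_{F⊥}` gives at most this maximum.

On the line, Prékopa–Leindler for functions with supremum `1` follows from `|K| + |L| ≤ |K + L|`
applied to superlevel sets; scaling and the arithmetic-geometric mean inequality give the general
case. It passes to log-concave densities, products and linear images, hence to Gaussian measures.
-/

open scoped ENNReal Pointwise

theorem rpow_mul_rpow_le_ofReal_mul_add {a b : ℝ} (ha : 0 < a) (hb : 0 < b) (hab : a + b = 1)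
    (x y : ℝ≥0∞) :
    x ^ a * y ^ b ≤ ENNReal.ofReal a * x + ENNReal.ofReal b * y := by
  have young := ENNReal.young_inequality (x ^ a) (y ^ b)
    (Real.HolderConjugate.inv_inv ha hb hab)
  rwa [ENNReal.rpow_rpow_inv ha.ne', ENNReal.rpow_rpow_inv hb.ne',
    ENNReal.ofReal_inv_of_pos ha, ENNReal.ofReal_inv_of_pos hb, div_eq_mul_inv, div_eq_mul_inv,
    inv_inv, inv_inv, mul_comm x, mul_comm y] at young

theorem rpow_mul_rpow_self {a b : ℝ} (ha : 0 ≤ a) (hb : 0 ≤ b) (hab : a + b = 1) (c : ℝ≥0∞) :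
    c ^ a * c ^ b = c := by
  rw [← ENNReal.rpow_add_of_nonneg _ _ ha hb, hab, ENNReal.rpow_one]

theorem mul_rpow_mul_mul_rpow {a b : ℝ} (ha : 0 ≤ a) (hb : 0 ≤ b) (c d u v : ℝ≥0∞) :
    (c * u) ^ a * (d * v) ^ b = c ^ a * d ^ b * (u ^ a * v ^ b) := by
  rw [ENNReal.mul_rpow_of_nonneg _ _ ha, ENNReal.mul_rpow_of_nonneg _ _ hb, mul_mul_mul_comm]

theorem volume_Ioi_inter_ofReal_lt (c : ℝ≥0∞) :
    volume (Ioi 0 ∩ {t : ℝ | ENNReal.ofReal t < c}) = c := by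
  induction c with
  | top => simp
  | coe c =>
    have : Ioi 0 ∩ {t : ℝ | ENNReal.ofReal t < c} = Ioo 0 (c : ℝ) := by
      ext t
      exact and_congr_right fun ht : 0 < t => by
        rw [mem_ofPred_eq, ENNReal.ofReal_lt_iff_lt_toReal ht.le ENNReal.coe_ne_top,
          ENNReal.coe_toReal]
    simp [this]

theorem lintegral_eq_lintegral_measure_ofReal_lt {α : Type*} [MeasurableSpace α] {μ : Measure α}
    [SFinite μ] {f : α → ℝ≥0∞} (hf : Measurable f) :
    ∫⁻ x, f x ∂μ = ∫⁻ t in Ioi (0 : ℝ), μ {x | ENNReal.ofReal t < f x} := by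
  have hS : MeasurableSet {p : α × ℝ | ENNReal.ofReal p.2 < f p.1} :=
    measurableSet_lt (by fun_prop) (by fun_prop)
  calc ∫⁻ x, f x ∂μ
      = ∫⁻ x, volume.restrict (Ioi 0) {t : ℝ | ENNReal.ofReal t < f x} ∂μ := by
        refine lintegral_congr fun x => ?_
        rw [Measure.restrict_apply (measurableSet_lt (by fun_prop) (by fun_prop)), inter_comm,
          volume_Ioi_inter_ofReal_lt]
    _ = ∫⁻ t in Ioi (0 : ℝ), μ {x | ENNReal.ofReal t < f x} :=
        (Measure.prod_apply hS).symm.trans (Measure.prod_apply_symm hS)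

theorem lintegral_eq_iSup_lintegral_min {α : Type*} [MeasurableSpace α] {μ : Measure α}
    {f : α → ℝ≥0∞} (hf : Measurable f) :
    ∫⁻ x, f x ∂μ = ⨆ n : ℕ, ∫⁻ x, min (f x) n ∂μ := by
  rw [← lintegral_iSup (fun n => hf.min measurable_const)
    (fun m n hmn x => min_le_min_left _ (Nat.cast_le.2 hmn))]
  simp only [← inf_iSup_eq, ENNReal.iSup_natCast, inf_top_eq]

theorem volume_add_volume_le_volume_add_of_isCompact {K L : Set ℝ} (hK : IsCompact K)
    (hL : IsCompact L) (hK₀ : K.Nonempty) (hL₀ : L.Nonempty) :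
    volume K + volume L ≤ volume (K + L) := by
  obtain ⟨a, haK, ha⟩ := hK.exists_isGreatest hK₀
  obtain ⟨b, hbL, hb⟩ := hL.exists_isLeast hL₀
  have hinter : (b +ᵥ K) ∩ (a +ᵥ L) ⊆ {a + b} := by
    rintro _ ⟨⟨x, hx, rfl⟩, ⟨y, hy, hxy⟩⟩
    have hxa := ha hx
    have hby := hb hy
    simp only [vadd_eq_add, mem_singleton_iff] at hxy ⊢
    linarith
  calc volume K + volume L
      = volume (b +ᵥ K) + volume (a +ᵥ L) := by simp only [measure_vadd]
    _ = volume ((b +ᵥ K) ∪ (a +ᵥ L)) :=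
        (measure_union₀ (hL.measurableSet.const_vadd a).nullMeasurableSet
          (measure_mono_null hinter (by simp))).symm
    _ ≤ volume (K + L) := by
        refine measure_mono (union_subset ?_ (vadd_set_subset_add haK))
        rw [add_comm]
        exact vadd_set_subset_add hbL

theorem volume_add_volume_le_volume_add {A B : Set ℝ} (hA : MeasurableSet A)
    (hB : MeasurableSet B) (hA₀ : A.Nonempty) (hB₀ : B.Nonempty) :
    volume A + volume B ≤ volume (A + B) := by
  obtain ⟨a, ha⟩ := hA₀
  obtain ⟨b, hb⟩ := hB₀
  rw [hA.measure_eq_iSup_isCompact, hB.measure_eq_iSup_isCompact]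
  simp only [iSup_and']
  refine ENNReal.biSup_add_biSup_le' ⟨∅, by simp⟩ ⟨∅, by simp⟩ ?_
  rintro K ⟨hKA, hK⟩ L ⟨hLB, hL⟩
  calc volume K + volume L
      ≤ volume (insert a K) + volume (insert b L) := by gcongr <;> exact subset_insert _ _
    _ ≤ volume (insert a K + insert b L) :=
        volume_add_volume_le_volume_add_of_isCompact (hK.insert a) (hL.insert b)
          (insert_nonempty _ _) (insert_nonempty _ _)
    _ ≤ volume (A + B) := by gcongr <;> simp [insert_subset_iff, *]

section RealLine

variable {a b : ℝ} {f g h : ℝ → ℝ≥0∞}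

theorem add_lintegral_le_of_iSup_eq_one (ha : 0 < a) (hb : 0 < b) (hab : a + b = 1)
    (hf : Measurable f) (hg : Measurable g) (hh : Measurable h)
    (hf₁ : ⨆ x, f x = 1) (hg₁ : ⨆ x, g x = 1)
    (hfgh : ∀ x y, f x ^ a * g y ^ b ≤ h (a • x + b • y)) :
    ENNReal.ofReal a * (∫⁻ x, f x) + ENNReal.ofReal b * (∫⁻ x, g x) ≤ ∫⁻ x, h x := by
  have hanti (u : ℝ → ℝ≥0∞) : Antitone fun t : ℝ => volume {x | ENNReal.ofReal t < u x} :=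
    fun s t hst => measure_mono fun x hx => (ENNReal.ofReal_le_ofReal hst).trans_lt hx
  simp only [lintegral_eq_lintegral_measure_ofReal_lt, hf, hg, hh]
  rw [← lintegral_const_mul _ (hanti f).measurable,
    ← lintegral_const_mul _ (hanti g).measurable,
    ← lintegral_add_left ((hanti f).measurable.const_mul _)]
  refine lintegral_mono fun t => ?_
  generalize ENNReal.ofReal t = τ
  -- Normalizing the suprema makes both superlevel sets nonempty at exactly the same levels.
  rcases lt_or_ge τ 1 with hτ | hτ
  · have hsub : a • {x | τ < f x} + b • {x | τ < g x} ⊆ {x | τ < h x} := by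
      rintro _ ⟨_, ⟨x, hx, rfl⟩, _, ⟨y, hy, rfl⟩, rfl⟩
      calc τ = τ ^ a * τ ^ b := (rpow_mul_rpow_self ha.le hb.le hab τ).symm
        _ < f x ^ a * g y ^ b :=
            ENNReal.mul_lt_mul (ENNReal.rpow_lt_rpow hx ha) (ENNReal.rpow_lt_rpow hy hb)
        _ ≤ h (a • x + b • y) := hfgh x y
    have hscale {c : ℝ} (hc : 0 < c) (s : Set ℝ) :
        volume (c • s) = ENNReal.ofReal c * volume s := by
      simp [Measure.addHaar_smul, abs_of_pos hc]
    rw [← hscale ha, ← hscale hb]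
    refine (volume_add_volume_le_volume_add ?_ ?_ ?_ ?_).trans (measure_mono hsub)
    · exact (measurableSet_lt measurable_const hf).const_smul₀ a
    · exact (measurableSet_lt measurable_const hg).const_smul₀ b
    · exact Nonempty.smul_set (lt_iSup_iff.1 (hτ.trans_eq hf₁.symm))
    · exact Nonempty.smul_set (lt_iSup_iff.1 (hτ.trans_eq hg₁.symm))
  · have hempty {u : ℝ → ℝ≥0∞} (hu : ⨆ x, u x = 1) : {x | τ < u x} = ∅ :=
      eq_empty_of_forall_notMem fun x hx =>
        hx.not_ge (((le_iSup u x).trans_eq hu).trans hτ)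
    simp [hempty hf₁, hempty hg₁]

theorem rpow_lintegral_mul_le_of_iSup_ne_top (ha : 0 < a) (hb : 0 < b) (hab : a + b = 1)
    (hf : Measurable f) (hg : Measurable g) (hh : Measurable h)
    (hfs : ⨆ x, f x ≠ ∞) (hgs : ⨆ x, g x ≠ ∞)
    (hfgh : ∀ x y, f x ^ a * g y ^ b ≤ h (a • x + b • y)) :
    (∫⁻ x, f x) ^ a * (∫⁻ x, g x) ^ b ≤ ∫⁻ x, h x := by
  set M := ⨆ x, f x with hM
  set N := ⨆ x, g x with hN
  rcases eq_or_ne M 0 with hM₀ | hM₀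
  · have : f = 0 := funext (ENNReal.iSup_eq_zero.1 (hM.symm.trans hM₀))
    simp [this, ha]
  rcases eq_or_ne N 0 with hN₀ | hN₀
  · have : g = 0 := funext (ENNReal.iSup_eq_zero.1 (hN.symm.trans hN₀))
    simp [this, hb]
  set k := M⁻¹ ^ a * N⁻¹ ^ b with hk
  have hk₀ : k ≠ 0 := by simp [hk, ha.not_gt, hb.not_gt, hfs, hgs]
  have hk_top : k ≠ ∞ := by finiteness
  have normalized : ENNReal.ofReal a * (∫⁻ x, M⁻¹ * f x) +
      ENNReal.ofReal b * (∫⁻ x, N⁻¹ * g x) ≤ ∫⁻ x, k * h x := by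
    refine add_lintegral_le_of_iSup_eq_one ha hb hab (hf.const_mul _) (hg.const_mul _)
      (hh.const_mul _) ?_ ?_ fun x y => ?_
    · rw [← ENNReal.mul_iSup, ← hM, ENNReal.inv_mul_cancel hM₀ hfs]
    · rw [← ENNReal.mul_iSup, ← hN, ENNReal.inv_mul_cancel hN₀ hgs]
    · rw [mul_rpow_mul_mul_rpow ha.le hb.le]
      gcongr
      exact hfgh x y
  rw [lintegral_const_mul _ hf, lintegral_const_mul _ hg, lintegral_const_mul _ hh] at normalized
  refine (ENNReal.mul_le_mul_iff_right hk₀ hk_top).1 ?_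
  rw [← mul_rpow_mul_mul_rpow ha.le hb.le]
  exact (rpow_mul_rpow_le_ofReal_mul_add ha hb hab _ _).trans normalized

end RealLine

section LogConcave

variable {E : Type*} [AddCommGroup E] [Module ℝ E]

/-- Log-concavity of a weight on a real vector space. Weights take values in `ℝ≥0∞`, so that the
marginal of a log-concave weight is log-concave even where it is infinite. The exponents are
strictly positive: the inequality is trivial when one of them vanishes. -/
def IsLogConcave (ρ : E → ℝ≥0∞) : Prop :=
  ∀ ⦃a b : ℝ⦄, 0 < a → 0 < b → a + b = 1 → ∀ x y, ρ x ^ a * ρ y ^ b ≤ ρ (a • x + b • y)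

/-- The measure `μ` satisfies the Prékopa–Leindler inequality for all exponents `a + b = 1`: this is
the property of Lebesgue and Gaussian measures from which log-concavity of marginals is deduced.
The exponents are strictly positive as in `IsLogConcave`. -/
def PrekopaLeindler [MeasurableSpace E] (μ : Measure E) : Prop :=
  ∀ ⦃a b : ℝ⦄, 0 < a → 0 < b → a + b = 1 → ∀ ⦃f g h : E → ℝ≥0∞⦄,
    Measurable f → Measurable g → Measurable h →
    (∀ x y, f x ^ a * g y ^ b ≤ h (a • x + b • y)) →
    (∫⁻ x, f x ∂μ) ^ a * (∫⁻ x, g x ∂μ) ^ b ≤ ∫⁻ x, h x ∂μ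

theorem isLogConcave_indicator_one {s : Set E} (hs : Convex ℝ s) :
    IsLogConcave (s.indicator (1 : E → ℝ≥0∞)) := by
  intro a b ha hb hab x y
  by_cases hx : x ∈ s
  · by_cases hy : y ∈ s
    · simp [hx, hy, hs hx hy ha.le hb.le hab]
    · simp [hy, hb]
  · simp [hx, ha]

theorem IsLogConcave.le_apply_zero {ρ : E → ℝ≥0∞} (hρ : IsLogConcave ρ)
    (heven : ∀ x, ρ (-x) = ρ x) (x : E) : ρ x ≤ ρ 0 := by
  have hhalf : (0 : ℝ) < 2⁻¹ := by norm_num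
  have hsum : (2⁻¹ : ℝ) + 2⁻¹ = 1 := by norm_num
  calc ρ x = ρ x ^ (2⁻¹ : ℝ) * ρ (-x) ^ (2⁻¹ : ℝ) := by
        rw [heven, rpow_mul_rpow_self hhalf.le hhalf.le hsum]
    _ ≤ ρ ((2⁻¹ : ℝ) • x + (2⁻¹ : ℝ) • -x) := hρ hhalf hhalf hsum x (-x)
    _ = ρ 0 := by rw [smul_neg, add_neg_cancel]

end LogConcave

namespace PrekopaLeindler

theorem volume_real : PrekopaLeindler (volume : Measure ℝ) := by
  intro a b ha hb hab f g h hf hg hh hfgh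
  have iSup_rpow {c : ℝ} (hc : 0 < c) (u : ℕ → ℝ≥0∞) : (⨆ n, u n) ^ c = ⨆ n, u n ^ c :=
    (ENNReal.orderIsoRpow c hc).map_iSup u
  rw [lintegral_eq_iSup_lintegral_min hf, lintegral_eq_iSup_lintegral_min hg, iSup_rpow ha,
    iSup_rpow hb, ENNReal.iSup_mul]
  refine iSup_le fun m => ?_
  rw [ENNReal.mul_iSup]
  refine iSup_le fun n => ?_
  refine rpow_lintegral_mul_le_of_iSup_ne_top ha hb hab (hf.min measurable_const)
    (hg.min measurable_const) hh ?_ ?_ fun x y => ?_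
  · exact ne_top_of_le_ne_top (ENNReal.natCast_ne_top m) (iSup_le fun x => min_le_right _ _)
  · exact ne_top_of_le_ne_top (ENNReal.natCast_ne_top n) (iSup_le fun x => min_le_right _ _)
  · calc min (f x) m ^ a * min (g y) n ^ b ≤ f x ^ a * g y ^ b := by
          gcongr <;> exact min_le_left _ _
      _ ≤ h (a • x + b • y) := hfgh x y

variable {E F : Type*} [AddCommGroup E] [Module ℝ E] [MeasurableSpace E]
  [AddCommGroup F] [Module ℝ F] [MeasurableSpace F] {μ : Measure E} {ν : Measure F}

protected theorem dirac (x : E) : PrekopaLeindler (Measure.dirac x) := by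
  intro a b _ _ hab f g h hf hg hh hfgh
  simpa only [lintegral_dirac' x, hf, hg, hh, Convex.combo_self hab] using hfgh x x

protected theorem withDensity (hμ : PrekopaLeindler μ) {ρ : E → ℝ≥0∞} (hρ : IsLogConcave ρ)
    (hρm : Measurable ρ) : PrekopaLeindler (μ.withDensity ρ) := by
  intro a b ha hb hab f g h hf hg hh hfgh
  simp only [lintegral_withDensity_eq_lintegral_mul μ hρm, hf, hg, hh]
  refine hμ ha hb hab (hρm.mul hf) (hρm.mul hg) (hρm.mul hh) fun x y => ?_
  simp only [Pi.mul_apply]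
  rw [mul_rpow_mul_mul_rpow ha.le hb.le]
  exact mul_le_mul' (hρ ha hb hab x y) (hfgh x y)

protected theorem map (hμ : PrekopaLeindler μ) {L : E →ₗ[ℝ] F} (hL : Measurable L) :
    PrekopaLeindler (μ.map L) := by
  intro a b ha hb hab f g h hf hg hh hfgh
  simp only [lintegral_map, hf, hg, hh, hL]
  refine hμ ha hb hab (hf.comp hL) (hg.comp hL) (hh.comp hL) fun x y => ?_
  simpa only [Function.comp_apply, map_add, map_smul] using hfgh (L x) (L y)

protected theorem prod [SFinite ν] (hμ : PrekopaLeindler μ)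
    (hν : PrekopaLeindler ν) : PrekopaLeindler (μ.prod ν) := by
  intro a b ha hb hab f g h hf hg hh hfgh
  rw [lintegral_prod _ hf.aemeasurable, lintegral_prod _ hg.aemeasurable,
    lintegral_prod _ hh.aemeasurable]
  refine hμ ha hb hab hf.lintegral_prod_right' hg.lintegral_prod_right'
    hh.lintegral_prod_right' fun x y => ?_
  exact hν ha hb hab (hf.comp measurable_prodMk_left) (hg.comp measurable_prodMk_left)
    (hh.comp measurable_prodMk_left) fun u v => hfgh (x, u) (y, v)

protected theorem pi {n : ℕ} {E : Fin n → Type*} [∀ i, AddCommGroup (E i)] [∀ i, Module ℝ (E i)]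
    [∀ i, MeasurableSpace (E i)] {μ : ∀ i, Measure (E i)} [∀ i, SigmaFinite (μ i)]
    (hμ : ∀ i, PrekopaLeindler (μ i)) : PrekopaLeindler (Measure.pi μ) := by
  induction n with
  | zero =>
    rw [Measure.pi_of_empty]
    exact .dirac _
  | succ n ih =>
    have hcoe : ⇑(Fin.consLinearEquiv ℝ E) = (MeasurableEquiv.piFinSuccAbove E 0).symm := by
      ext p i
      cases i using Fin.cases <;> rfl
    have hcons : MeasurePreserving (Fin.consLinearEquiv ℝ E)
        ((μ 0).prod (.pi fun i => μ i.succ)) (.pi μ) :=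
      hcoe ▸ (measurePreserving_piFinSuccAbove μ 0).symm
    rw [← hcons.map_eq]
    exact ((hμ 0).prod (ih fun i => hμ i.succ)).map (L := (Fin.consLinearEquiv ℝ E).toLinearMap)
      hcons.measurable

theorem isLogConcave_lintegral (hμ : PrekopaLeindler μ) {ρ : E × F → ℝ≥0∞}
    (hρ : IsLogConcave ρ) (hρm : Measurable ρ) : IsLogConcave fun y => ∫⁻ x, ρ (x, y) ∂μ :=
  fun _ _ ha hb hab y z =>
    hμ ha hb hab (hρm.comp measurable_prodMk_right) (hρm.comp measurable_prodMk_right)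
      (hρm.comp measurable_prodMk_right) fun u v => hρ ha hb hab (u, y) (v, z)

theorem isLogConcave_measure_slice (hμ : PrekopaLeindler μ) {s : Set (E × F)} (hs : Convex ℝ s)
    (hsm : MeasurableSet s) : IsLogConcave fun y => μ ((·, y) ⁻¹' s) := by
  have hmarginal := hμ.isLogConcave_lintegral (isLogConcave_indicator_one hs)
    (measurable_one.indicator hsm)
  have hslice (y : F) : ∫⁻ x, s.indicator 1 (x, y) ∂μ = μ ((·, y) ⁻¹' s) :=
    lintegral_indicator_one (measurable_prodMk_right hsm)
  simpa only [hslice] using hmarginal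

theorem prod_apply_le_measure_slice_zero [MeasurableNeg E] [μ.IsNegInvariant] [SFinite μ]
    [IsProbabilityMeasure ν] (hμ : PrekopaLeindler μ) {s : Set (E × F)} (hs : Convex ℝ s)
    (hsm : MeasurableSet s) (hsymm : ∀ p ∈ s, -p ∈ s) :
    μ.prod ν s ≤ μ ((·, 0) ⁻¹' s) := by
  have heven (y : F) : μ ((·, -y) ⁻¹' s) = μ ((·, y) ⁻¹' s) := by
    have hneg : -((·, -y) ⁻¹' s : Set E) = (·, y) ⁻¹' s := by
      ext x
      exact ⟨fun hx => by simpa using hsymm _ hx, hsymm (x, y)⟩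
    rw [← hneg, Measure.measure_neg]
  calc μ.prod ν s = ∫⁻ y, μ ((·, y) ⁻¹' s) ∂ν := Measure.prod_apply_symm hsm
    _ ≤ ∫⁻ _, μ ((·, 0) ⁻¹' s) ∂ν :=
        lintegral_mono ((hμ.isLogConcave_measure_slice hs hsm).le_apply_zero heven)
    _ = μ ((·, 0) ⁻¹' s) := by simp

end PrekopaLeindler

section Gaussian

open ProbabilityTheory (gaussianReal gaussianPDF gaussianPDFReal)

theorem isLogConcave_ofReal_mul_exp_neg {E : Type*} [AddCommGroup E] [Module ℝ E] {φ : E → ℝ}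
    (hφ : ConvexOn ℝ univ φ) {c : ℝ} (hc : 0 ≤ c) :
    IsLogConcave fun x => ENNReal.ofReal (c * exp (-φ x)) := by
  intro a b ha hb hab x y
  have hconv : φ (a • x + b • y) ≤ a * φ x + b * φ y := hφ.2 trivial trivial ha.le hb.le hab
  have hexp {t : ℝ} (ht : 0 < t) (z : E) :
      ENNReal.ofReal (exp (-φ z)) ^ t = ENNReal.ofReal (exp (-(t * φ z))) := by
    rw [ENNReal.ofReal_rpow_of_nonneg (exp_pos _).le ht.le, ← exp_mul, neg_mul, mul_comm]
  simp only [ENNReal.ofReal_mul hc]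
  rw [mul_rpow_mul_mul_rpow ha.le hb.le, rpow_mul_rpow_self ha.le hb.le hab, hexp ha, hexp hb,
    ← ENNReal.ofReal_mul (exp_pos _).le, ← exp_add]
  gcongr
  linarith

theorem isLogConcave_gaussianPDF (m : ℝ) (v : NNReal) : IsLogConcave (gaussianPDF m v) := by
  have hconv : ConvexOn ℝ univ fun x : ℝ => (2 * (v : ℝ))⁻¹ * (x - m) ^ 2 := by
    have hsq := ((even_two.convexOn_pow (𝕜 := ℝ)).translate_left (-m)).smul
      (show 0 ≤ (2 * (v : ℝ))⁻¹ by positivity)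
    simpa only [Function.comp_def, ← sub_eq_add_neg, preimage_univ, smul_eq_mul] using hsq
  convert isLogConcave_ofReal_mul_exp_neg hconv (c := (√(2 * π * v))⁻¹) (by positivity) using 2
  rw [gaussianPDF, gaussianPDFReal, neg_div, div_eq_inv_mul]

theorem PrekopaLeindler.gaussianReal (m : ℝ) (v : NNReal) : PrekopaLeindler (gaussianReal m v) := by
  rcases eq_or_ne v 0 with rfl | hv
  · rw [ProbabilityTheory.gaussianReal_zero_var]
    exact .dirac m
  · rw [ProbabilityTheory.gaussianReal_of_var_ne_zero m hv]
    exact volume_real.withDensity (isLogConcave_gaussianPDF m v) (by fun_prop)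

local notation "γ" => ProbabilityTheory.stdGaussian

variable {E F : Type*} [NormedAddCommGroup E] [InnerProductSpace ℝ E] [FiniteDimensional ℝ E]
  [MeasurableSpace E] [BorelSpace E] [NormedAddCommGroup F] [InnerProductSpace ℝ F]
  [FiniteDimensional ℝ F] [MeasurableSpace F] [BorelSpace F]

theorem PrekopaLeindler.stdGaussian : PrekopaLeindler (γ E) := by
  let L := Fintype.linearCombination ℝ (stdOrthonormalBasis ℝ E)
  exact (PrekopaLeindler.pi fun _ => .gaussianReal 0 1).map (L := L)
    L.continuous_of_finiteDimensional.measurable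

instance isNegInvariant_stdGaussian : (γ E).IsNegInvariant :=
  ⟨ProbabilityTheory.stdGaussian_map (LinearIsometryEquiv.neg ℝ)⟩

theorem charFun_map_subtype_stdGaussian (K : Submodule ℝ E) (t : E) :
    charFun ((γ K).map ((↑) : K → E)) t =
      Complex.exp (-‖K.orthogonalProjectionOnto t‖ ^ 2 / 2) := by
  rw [← ProbabilityTheory.charFun_stdGaussian, charFun_apply, charFun_apply,
    integral_map (by fun_prop) (by fun_prop)]
  congr with x
  rw [← Submodule.inner_orthogonalProjectionOnto_eq_of_mem_left]

theorem conv_map_subtype_stdGaussian_orthogonal (K : Submodule ℝ E) :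
    (γ K).map ((↑) : K → E) ∗ (γ Kᗮ).map ((↑) : Kᗮ → E) = γ E := by
  refine Measure.ext_of_charFun (funext fun t => ?_)
  rw [charFun_conv, charFun_map_subtype_stdGaussian, charFun_map_subtype_stdGaussian,
    ProbabilityTheory.charFun_stdGaussian, ← Complex.exp_add]
  have pyth : (‖t‖ : ℂ) ^ 2 =
      ‖K.orthogonalProjectionOnto t‖ ^ 2 + ‖Kᗮ.orthogonalProjectionOnto t‖ ^ 2 :=
    mod_cast K.norm_sq_eq_add_norm_sq_projection t
  rw [pyth]
  congr 1
  ring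

theorem stdGaussian_apply_eq_prod (K : Submodule ℝ E) {s : Set E} (hs : MeasurableSet s) :
    γ E s = (γ K).prod (γ Kᗮ) ((fun p => (p.1 : E) + p.2) ⁻¹' s) := by
  rw [← conv_map_subtype_stdGaussian_orthogonal K, Measure.conv,
    Measure.map_prod_map _ _ (by fun_prop) (by fun_prop),
    Measure.map_map (by fun_prop) (by fun_prop), Measure.map_apply (by fun_prop) hs]
  rfl

theorem stdGaussian_le_stdGaussian_submodule (K : Submodule ℝ E) {s : Set E}
    (hs : Convex ℝ s) (hsm : MeasurableSet s) (hsymm : ∀ x ∈ s, -x ∈ s) :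
    γ E s ≤ γ K ((↑) ⁻¹' s) := by
  let sum : K × Kᗮ →ₗ[ℝ] E := K.subtype.coprod Kᗮ.subtype
  have hsum_meas : Measurable sum := sum.continuous_of_finiteDimensional.measurable
  have hslice : (fun x : K => (x, (0 : Kᗮ))) ⁻¹' (sum ⁻¹' s) = (↑) ⁻¹' s := by
    ext x
    simp [sum]
  rw [stdGaussian_apply_eq_prod K hsm, ← hslice]
  refine PrekopaLeindler.stdGaussian.prod_apply_le_measure_slice_zero (hs.linear_preimage sum)
    (hsum_meas hsm) fun p hp => ?_
  change sum (-p) ∈ s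
  rw [map_neg]
  exact hsymm _ hp

theorem integrable_const_mul_exp_neg_sq_norm (c : ℝ) :
    Integrable fun x : E => c * exp (-‖x‖ ^ 2 / 2) := by
  have hgauss := GaussianFourier.integral_rexp_neg_mul_sq_norm (V := E) (b := 2⁻¹) (by norm_num)
  have hint : Integrable fun x : E => exp (-2⁻¹ * ‖x‖ ^ 2) :=
    .of_integral_ne_zero (by rw [hgauss]; positivity)
  convert hint.const_mul c using 3
  ring_nf

theorem stdGaussian_eq_withDensity : γ E = volume.withDensity fun x =>
    ENNReal.ofReal ((2 * π) ^ (-(Module.finrank ℝ E : ℝ) / 2) * Real.exp (-‖x‖ ^ 2 / 2)) := by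
  set c := (2 * π) ^ (-(Module.finrank ℝ E : ℝ) / 2) with hc
  have := isFiniteMeasure_withDensity_ofReal
    (integrable_const_mul_exp_neg_sq_norm (E := E) c).hasFiniteIntegral
  refine Measure.ext_of_charFun (funext fun t => ?_)
  have fourier := GaussianFourier.integral_cexp_neg_mul_sq_norm_add (b := 2⁻¹)
    (by norm_num) Complex.I t
  have hconst : (c : ℂ) * (π / 2⁻¹ : ℂ) ^ (Module.finrank ℝ E / 2 : ℂ) = 1 := by
    rw [div_inv_eq_mul, mul_comm (π : ℂ), hc, Complex.ofReal_cpow (by positivity)]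
    push_cast
    rw [← Complex.cpow_add _ _ (by simp [pi_ne_zero]), neg_div, neg_add_cancel, Complex.cpow_zero]
  symm
  calc charFun (volume.withDensity fun x : E => ENNReal.ofReal (c * exp (-‖x‖ ^ 2 / 2))) t
      = ∫ x : E, c * Complex.exp (-2⁻¹ * ‖x‖ ^ 2 + Complex.I * inner ℝ t x) := by
        rw [charFun_apply, integral_withDensity_eq_integral_toReal_smul (by fun_prop) (by simp)]
        congr with x
        rw [ENNReal.toReal_ofReal (by positivity), Complex.real_smul, real_inner_comm]
        push_cast
        rw [mul_assoc, ← Complex.exp_add]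
        ring_nf
    _ = Complex.exp (-‖t‖ ^ 2 / 2) := by
        rw [integral_const_mul, fourier, ← mul_assoc, hconst, one_mul, Complex.I_sq]
        ring_nf
    _ = charFun (γ E) t := (ProbabilityTheory.charFun_stdGaussian t).symm

theorem stdGaussian_eq_probabilityTheory_stdGaussian (k : ℕ) :
    stdGaussian k = γ (EuclideanSpace ℝ (Fin k)) := by
  rw [stdGaussian_eq_withDensity, finrank_euclideanSpace_fin, stdGaussian]

theorem stmt9_general (J : E →ₗᵢ[ℝ] F) {A : Set F} (hA : Convex ℝ A) (hsymm : ∀ x ∈ A, -x ∈ A) :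
    γ F A ≤ γ E (J ⁻¹' A) := by
  have hfrontier : γ F (frontier A) = 0 := by
    rw [stdGaussian_eq_withDensity]
    exact withDensity_absolutelyContinuous _ _ (hA.addHaar_frontier volume)
  have hsymm_interior : ∀ x ∈ interior A, -x ∈ interior A := fun x hx =>
    ((Homeomorph.neg F).preimage_interior A).ge (interior_mono hsymm hx)
  calc γ F A = γ F (interior A) := (measure_interior_of_null_frontier hfrontier).symm
    _ ≤ γ J.range ((↑) ⁻¹' interior A) :=
        stdGaussian_le_stdGaussian_submodule _ hA.interior isOpen_interior.measurableSet
          hsymm_interior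
    _ = γ E (J ⁻¹' interior A) := by
        rw [← ProbabilityTheory.stdGaussian_map J.equivRange,
          Measure.map_apply (by fun_prop) (isOpen_interior.measurableSet.preimage (by fun_prop))]
        rfl
    _ ≤ γ E (J ⁻¹' A) := by gcongr; exact interior_subset

end Gaussian

/-- A symmetric convex Borel set has Gaussian measure which only increases when restricting to
(the standard Gaussian of) a linear subspace, here realized as the range of a linear isometry
`J : ℝᵈ → ℝⁿ`. -/
theorem stmt9 (n d : ℕ)
    (J : EuclideanSpace ℝ (Fin d) →ₗᵢ[ℝ] EuclideanSpace ℝ (Fin n))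
    (A : Set (EuclideanSpace ℝ (Fin n)))
    (hA : MeasurableSet A) (hAconv : Convex ℝ A) (hAsymm : ∀ x ∈ A, -x ∈ A) :
    stdGaussian n A ≤ stdGaussian d (J ⁻¹' A) := by
  simpa only [stdGaussian_eq_probabilityTheory_stdGaussian] using stmt9_general J hAconv hAsymm
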